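/- arXiv:2410.05462 — 2 statements merged into one kernel-verified Lean document; each statement's English description precedes it below -/
import Mathlib

section
/- Let 1 ≤ p ≤ 2 and let K be an n×d real matrix with rows K_1,…,K_n. Then the sum over j = 1,…,n of the ℓ_p-sensitivities σ^{(p)}_j(K) is at most d. -/
/-- The `ℓ_p`-sensitivity of row `j` of an `n × d` real matrix `K`:
`σ^{(p)}_j(K) = sup { |⟨K_j, v⟩|^p / ∑_ℓ |⟨K_ℓ, v⟩|^p : v ∈ ℝ^d, Kv ≠ 0 }`. -/
noncomputable def lpSens {n d : ℕ} (p : ℝ) (K : Matrix (Fin n) (Fin d) ℝ) (j : Fin n) : ℝ :=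
  sSup {x : ℝ | ∃ v : Fin d → ℝ, K.mulVec v ≠ 0 ∧
    x = |∑ i, K j i * v i| ^ p / ∑ ℓ, |∑ i, K ℓ i * v i| ^ p}

/-!
Each sensitivity is bounded by a Lewis weight, and the Lewis weights sum to at most the rank.
Let `a j` be the rows, viewed in their span `E`. Among the linear maps `R` on `E` with
`∑ j, ‖R (a j)‖ ^ p ≤ 1`, take one of largest determinant, and put `u j = R (a j)`. Perturbing `R`
to `(1 + t y yᵀ) R` multiplies the determinant by `1 + t ‖y‖²`, while for `p ≤ 2` the concavity of
`s ↦ s ^ (p / 2)` bounds the change of the constraint. Stationarity at `t = 0` is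
Lewis's identity `dim E * ∑ j, ‖u j‖ ^ (p - 2) * ⟪y, u j⟫ ^ 2 = ‖y‖ ^ 2`. With the Cauchy–Schwarz
inequality it gives `‖y‖ ^ p ≤ dim E * ∑ j, |⟪y, u j⟫| ^ p`, so that `w j = dim E * ‖u j‖ ^ p`
dominates the sensitivity of row `j`.
-/

open Filter Module Topology InnerProductSpace
open scoped RealInnerProductSpace

lemma rpow_le_rpow_add_mul_sq_sub_sq {a b p : ℝ} (ha : 0 < a) (hb : 0 ≤ b) (hp0 : 0 ≤ p)
    (hp2 : p ≤ 2) :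
    b ^ p ≤ a ^ p + p / 2 * a ^ (p - 2) * (b ^ 2 - a ^ 2) := by
  have sq_rpow_half {x : ℝ} (hx : 0 ≤ x) : (x ^ 2) ^ (p / 2) = x ^ p := by
    rw [← Real.rpow_natCast_mul hx, Nat.cast_two, mul_div_cancel₀ p two_ne_zero]
  have bernoulli : (1 + (b ^ 2 / a ^ 2 - 1)) ^ (p / 2) ≤ 1 + p / 2 * (b ^ 2 / a ^ 2 - 1) :=
    rpow_one_add_le_one_add_mul_self (by linarith [show 0 ≤ b ^ 2 / a ^ 2 by positivity])
      (by linarith) (by linarith)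
  calc b ^ p = a ^ p * (1 + (b ^ 2 / a ^ 2 - 1)) ^ (p / 2) := by
        rw [add_sub_cancel, Real.div_rpow (by positivity) (by positivity), sq_rpow_half hb,
          sq_rpow_half ha.le, mul_div_cancel₀ _ (Real.rpow_pos_of_pos ha p).ne']
    _ ≤ a ^ p * (1 + p / 2 * (b ^ 2 / a ^ 2 - 1)) := by gcongr
    _ = a ^ p + p / 2 * a ^ (p - 2) * (b ^ 2 - a ^ 2) := by
        rw [Real.rpow_sub ha, Real.rpow_two]
        field_simp

lemma eq_of_eventually_log_one_add_mul_le {m c : ℝ}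
    (h : ∀ᶠ t in 𝓝 (0 : ℝ), Real.log (1 + t * c) ≤ m * (t + t ^ 2 * c / 2)) : m = c := by
  have hasDerivAt_log : HasDerivAt (fun t : ℝ => Real.log (1 + t * c)) c 0 := by
    simpa using (((hasDerivAt_id (0 : ℝ)).mul_const c).const_add 1).log (by simp)
  have hasDerivAt_quadratic : HasDerivAt (fun t : ℝ => m * (t + t ^ 2 * c / 2)) m 0 := by
    simpa using ((hasDerivAt_id' (0 : ℝ)).fun_add
      (((hasDerivAt_pow 2 (0 : ℝ)).mul_const c).div_const 2)).const_mul m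
  have isLocalMin_sub :
      IsLocalMin (fun t : ℝ => m * (t + t ^ 2 * c / 2) - Real.log (1 + t * c)) 0 := by
    filter_upwards [h] with t ht
    simpa using ht
  exact sub_eq_zero.1 <|
    isLocalMin_sub.hasDerivAt_eq_zero (hasDerivAt_quadratic.fun_sub hasDerivAt_log)

section InnerProductSpace

variable {E : Type*} [NormedAddCommGroup E] [InnerProductSpace ℝ E]

lemma norm_add_smul_inner_smul_sq (t : ℝ) (y u : E) :
    ‖u + t • ⟪y, u⟫ • y‖ ^ 2 = ‖u‖ ^ 2 + ⟪y, u⟫ ^ 2 * (2 * t + t ^ 2 * ‖y‖ ^ 2) := by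
  rw [norm_add_sq_real, inner_smul_right, inner_smul_right, real_inner_comm, norm_smul, norm_smul,
    mul_pow, mul_pow, Real.norm_eq_abs, Real.norm_eq_abs, sq_abs, sq_abs]
  ring

lemma norm_add_smul_inner_smul_rpow_le {p : ℝ} (hp0 : 0 ≤ p) (hp2 : p ≤ 2) (t : ℝ) (y u : E) :
    ‖u + t • ⟪y, u⟫ • y‖ ^ p ≤
      ‖u‖ ^ p + ‖u‖ ^ (p - 2) * ⟪y, u⟫ ^ 2 * (p * (t + t ^ 2 * ‖y‖ ^ 2 / 2)) := by
  rcases eq_or_ne u 0 with rfl | hu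
  · simp
  · refine (rpow_le_rpow_add_mul_sq_sub_sq (norm_pos_iff.2 hu) (norm_nonneg _) hp0 hp2).trans_eq ?_
    rw [norm_add_smul_inner_smul_sq]
    ring

lemma abs_inner_rpow_le {p : ℝ} (hp : 0 ≤ p) (y u : E) :
    |⟪y, u⟫| ^ p ≤ ‖y‖ ^ p * ‖u‖ ^ p := by
  rw [← Real.mul_rpow (norm_nonneg y) (norm_nonneg u)]
  exact Real.rpow_le_rpow (abs_nonneg _) (abs_real_inner_le_norm y u) hp

lemma norm_rpow_sub_two_mul_inner_sq_le {p : ℝ} (hp2 : p ≤ 2) (y u : E) :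
    ‖u‖ ^ (p - 2) * ⟪y, u⟫ ^ 2 ≤ ‖y‖ ^ (2 - p) * |⟪y, u⟫| ^ p := by
  rcases eq_or_ne ⟪y, u⟫ 0 with h | h
  · rw [h, sq, mul_zero, mul_zero]
    positivity
  have hu : 0 < ‖u‖ := norm_pos_iff.2 fun hu => h (by rw [hu, inner_zero_right])
  calc ‖u‖ ^ (p - 2) * ⟪y, u⟫ ^ 2
      = ‖u‖ ^ (p - 2) * (|⟪y, u⟫| ^ (2 - p) * |⟪y, u⟫| ^ p) := by
        rw [← Real.rpow_add (abs_pos.2 h), sub_add_cancel, Real.rpow_two, sq_abs]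
    _ ≤ ‖u‖ ^ (p - 2) * (‖y‖ ^ (2 - p) * ‖u‖ ^ (2 - p) * |⟪y, u⟫| ^ p) := by
        gcongr
        exact abs_inner_rpow_le (by linarith) y u
    _ = ‖u‖ ^ (p - 2) * ‖u‖ ^ (2 - p) * (‖y‖ ^ (2 - p) * |⟪y, u⟫| ^ p) := by ring
    _ = ‖y‖ ^ (2 - p) * |⟪y, u⟫| ^ p := by
        rw [← Real.rpow_add hu, sub_add_sub_cancel, sub_self, Real.rpow_zero, one_mul]

lemma det_one_add_smul_rankOne_self [FiniteDimensional ℝ E] (t : ℝ) (y : E) :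
    (1 + t • rankOne ℝ y y : E →L[ℝ] E).det = 1 + t * ‖y‖ ^ 2 := by
  have : ((1 + t • rankOne ℝ y y : E →L[ℝ] E) : E →ₗ[ℝ] E) =
      LinearMap.transvection (t • innerₛₗ ℝ y) y := by
    ext x
    simp [LinearMap.transvection.apply, smul_smul]
  rw [ContinuousLinearMap.det, this, LinearMap.transvection.det, LinearMap.smul_apply,
    innerₛₗ_apply_apply, real_inner_self_eq_norm_sq, smul_eq_mul]

end InnerProductSpace

section LewisPosition

variable {ι E : Type*} [Fintype ι] [NormedAddCommGroup E] [InnerProductSpace ℝ E]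

/-- The functional whose unit sublevel set is the constraint in Lewis's extremal problem: the
`p`-th power of the `ℓ_p(ι; E)` (quasi-)norm of the image of the family `a` under `R`. -/
noncomputable def lewisFunctional (p : ℝ) (a : ι → E) (R : E →L[ℝ] E) : ℝ :=
  ∑ j, ‖R (a j)‖ ^ p

/-- The quadratic form of the frame operator of the reweighted family
`‖u j‖ ^ ((p - 2) / 2) • u j`, evaluated at `y`; for `u = R ∘ a` it governs the first-order change
of `lewisFunctional p a R` when `R` is stretched along `y`. A member `u j = 0` contributes `0`,
whatever the value of `0 ^ (p - 2)`. -/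
noncomputable def lewisForm (p : ℝ) (u : ι → E) (y : E) : ℝ :=
  ∑ j, ‖u j‖ ^ (p - 2) * ⟪y, u j⟫ ^ 2

/-- A family `u` in `E` is in `ℓ_p` Lewis position if the norms of its members, raised to the
power `p`, sum to at most `1` and its Lewis form is `1 / dim E` times the squared norm. If
`E` is nontrivial, taking traces in the second condition forces equality in the first. -/
structure IsLewisPosition (p : ℝ) (u : ι → E) : Prop where
  sum_norm_rpow_le_one : ∑ j, ‖u j‖ ^ p ≤ 1
  finrank_mul_lewisForm : ∀ y : E, finrank ℝ E * lewisForm p u y = ‖y‖ ^ 2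

lemma lewisFunctional_nonneg (p : ℝ) (a : ι → E) (R : E →L[ℝ] E) : 0 ≤ lewisFunctional p a R :=
  Finset.sum_nonneg fun _ _ => by positivity

lemma lewisFunctional_smul (p : ℝ) (a : ι → E) {c : ℝ} (hc : 0 ≤ c) (R : E →L[ℝ] E) :
    lewisFunctional p a (c • R) = c ^ p * lewisFunctional p a R := by
  simp only [lewisFunctional, Finset.mul_sum, smul_apply, norm_smul,
    Real.norm_of_nonneg hc, Real.mul_rpow hc (norm_nonneg _)]

lemma continuous_lewisFunctional {p : ℝ} (hp : 0 ≤ p) (a : ι → E) :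
    Continuous (lewisFunctional p a) :=
  continuous_finsetSum _ fun _ _ => Continuous.rpow_const (by fun_prop) fun _ => Or.inr hp

lemma norm_apply_le_one_of_lewisFunctional_le_one {p : ℝ} (hp : 0 < p) {a : ι → E}
    {R : E →L[ℝ] E} (hR : lewisFunctional p a R ≤ 1) (j : ι) : ‖R (a j)‖ ≤ 1 := by
  have : ‖R (a j)‖ ^ p ≤ 1 :=
    (Finset.single_le_sum (f := fun j => ‖R (a j)‖ ^ p) (fun _ _ => by positivity)
      (Finset.mem_univ j)).trans hR
  rwa [← Real.one_rpow p, Real.rpow_le_rpow_iff (norm_nonneg _) zero_le_one hp] at this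

lemma lewisFunctional_one_add_smul_rankOne_mul_le {p : ℝ} (hp0 : 0 ≤ p) (hp2 : p ≤ 2) (a : ι → E)
    (R : E →L[ℝ] E) (t : ℝ) (y : E) :
    lewisFunctional p a ((1 + t • rankOne ℝ y y) * R) ≤ lewisFunctional p a R +
      lewisForm p (fun j => R (a j)) y * (p * (t + t ^ 2 * ‖y‖ ^ 2 / 2)) := by
  rw [lewisFunctional, lewisFunctional, lewisForm, Finset.sum_mul, ← Finset.sum_add_distrib]
  exact Finset.sum_le_sum fun j _ => norm_add_smul_inner_smul_rpow_le hp0 hp2 t y (R (a j))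

lemma IsLewisPosition.norm_rpow_le {p : ℝ} (hp0 : p ≠ 0) (hp2 : p ≤ 2) {u : ι → E}
    (hu : IsLewisPosition p u) (y : E) :
    ‖y‖ ^ p ≤ finrank ℝ E * ∑ j, |⟪y, u j⟫| ^ p := by
  rcases eq_or_ne y 0 with rfl | hy
  · rw [norm_zero, Real.zero_rpow hp0]
    positivity
  have hy' : 0 < ‖y‖ := norm_pos_iff.2 hy
  refine le_of_mul_le_mul_left ?_ (Real.rpow_pos_of_pos hy' (2 - p))
  calc ‖y‖ ^ (2 - p) * ‖y‖ ^ p = ‖y‖ ^ 2 := by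
        rw [← Real.rpow_add hy', sub_add_cancel, Real.rpow_two]
    _ = finrank ℝ E * ∑ j, ‖u j‖ ^ (p - 2) * ⟪y, u j⟫ ^ 2 := (hu.finrank_mul_lewisForm y).symm
    _ ≤ finrank ℝ E * ∑ j, ‖y‖ ^ (2 - p) * |⟪y, u j⟫| ^ p := by
        gcongr ?_ * ∑ j, ?_
        exact norm_rpow_sub_two_mul_inner_sq_le hp2 y (u _)
    _ = ‖y‖ ^ (2 - p) * (finrank ℝ E * ∑ j, |⟪y, u j⟫| ^ p) := by
        rw [← Finset.mul_sum, mul_left_comm]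

variable [FiniteDimensional ℝ E]

lemma isCompact_setOf_lewisFunctional_le_one {p : ℝ} (hp : 0 < p) {a : ι → E}
    (ha : Submodule.span ℝ (Set.range a) = ⊤) :
    IsCompact {R : E →L[ℝ] E | lewisFunctional p a R ≤ 1} := by
  let evalAt : (E →L[ℝ] E) →ₗ[ℝ] (ι → E) :=
    LinearMap.pi fun j => (ContinuousLinearMap.apply ℝ E (a j)).toLinearMap
  have evalAt_injective : LinearMap.ker evalAt = ⊥ := LinearMap.ker_eq_bot'.2 fun R hR =>
    ContinuousLinearMap.coe_injective <| LinearMap.ext_on_range ha fun j => congrFun hR j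
  have isCompact_preimage : IsCompact (evalAt ⁻¹' Metric.closedBall 0 1) :=
    (LinearMap.isClosedEmbedding_of_injective evalAt_injective).isCompact_preimage
      (isCompact_closedBall 0 1)
  refine isCompact_preimage.of_isClosed_subset
    (isClosed_le (continuous_lewisFunctional hp.le a) continuous_const) fun R hR => ?_
  rw [Set.mem_preimage, mem_closedBall_zero_iff, pi_norm_le_iff_of_nonneg zero_le_one]
  exact norm_apply_le_one_of_lewisFunctional_le_one hp hR

lemma det_le_rpow_mul_det_of_isMaxOn {p : ℝ} (hp : p ≠ 0) {a : ι → E} {R : E →L[ℝ] E}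
    (hR : IsMaxOn ContinuousLinearMap.det {R | lewisFunctional p a R ≤ 1} R) {b : ℝ} (hb : 0 < b)
    {S : E →L[ℝ] E} (hS : lewisFunctional p a S ≤ b) :
    S.det ≤ b ^ (finrank ℝ E / p) * R.det := by
  set c := b ^ p⁻¹ with hc
  have hc0 : 0 < c := Real.rpow_pos_of_pos hb _
  have scaled_mem : lewisFunctional p a (c⁻¹ • S) ≤ 1 := by
    rw [lewisFunctional_smul p a (inv_nonneg.2 hc0.le), Real.inv_rpow hc0.le, hc,
      Real.rpow_inv_rpow hb.le hp, inv_mul_le_one₀ hb]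
    exact hS
  have det_scaled : (c⁻¹ • S).det = (c ^ finrank ℝ E)⁻¹ * S.det := by
    rw [ContinuousLinearMap.det, ContinuousLinearMap.toLinearMap_smul, LinearMap.det_smul, inv_pow]
  have c_pow_finrank : c ^ finrank ℝ E = b ^ (finrank ℝ E / p) := by
    rw [hc, ← Real.rpow_mul_natCast hb.le, div_eq_inv_mul]
  rw [← c_pow_finrank, ← inv_mul_le_iff₀ (by positivity), ← det_scaled]
  exact hR scaled_mem

lemma exists_det_pos_isMaxOn_det {p : ℝ} (hp : 0 < p) {a : ι → E}
    (ha : Submodule.span ℝ (Set.range a) = ⊤) :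
    ∃ R : E →L[ℝ] E, 0 < R.det ∧ lewisFunctional p a R ≤ 1 ∧
      IsMaxOn ContinuousLinearMap.det {R | lewisFunctional p a R ≤ 1} R := by
  have zero_mem : lewisFunctional p a 0 ≤ 1 := by
    simp [lewisFunctional, Real.zero_rpow hp.ne']
  obtain ⟨R, hR, hmax⟩ := (isCompact_setOf_lewisFunctional_le_one hp ha).exists_isMaxOn
    ⟨0, zero_mem⟩ ContinuousLinearMap.continuous_det.continuousOn
  have b_pos : 0 < lewisFunctional p a 1 + 1 :=
    add_pos_of_nonneg_of_pos (lewisFunctional_nonneg p a 1) one_pos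
  have one_le : 1 ≤ (lewisFunctional p a 1 + 1) ^ (finrank ℝ E / p) * R.det := by
    have h := det_le_rpow_mul_det_of_isMaxOn hp.ne' hmax b_pos (le_add_of_nonneg_right zero_le_one)
    rwa [show (1 : E →L[ℝ] E).det = 1 from LinearMap.det_id] at h
  exact ⟨R, pos_of_mul_pos_right (zero_lt_one.trans_le one_le) (Real.rpow_nonneg b_pos.le _),
    hR, hmax⟩

lemma log_one_add_le_of_isMaxOn_det {p : ℝ} (hp0 : 0 < p) (hp2 : p ≤ 2) {a : ι → E}
    {R : E →L[ℝ] E} (hdet : 0 < R.det) (hR : lewisFunctional p a R ≤ 1)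
    (hmax : IsMaxOn ContinuousLinearMap.det {R | lewisFunctional p a R ≤ 1} R) {t : ℝ} {y : E}
    (ht : 0 < 1 + t * ‖y‖ ^ 2)
    (hb : 0 < 1 + lewisForm p (fun j => R (a j)) y * (p * (t + t ^ 2 * ‖y‖ ^ 2 / 2))) :
    Real.log (1 + t * ‖y‖ ^ 2) ≤
      finrank ℝ E * lewisForm p (fun j => R (a j)) y * (t + t ^ 2 * ‖y‖ ^ 2 / 2) := by
  set B := lewisForm p (fun j => R (a j)) y
  set b := 1 + B * (p * (t + t ^ 2 * ‖y‖ ^ 2 / 2)) with b_def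
  have functional_le : lewisFunctional p a ((1 + t • rankOne ℝ y y) * R) ≤ b :=
    (lewisFunctional_one_add_smul_rankOne_mul_le hp0.le hp2 a R t y).trans (add_le_add_left hR _)
  have det_perturbed : ((1 + t • rankOne ℝ y y) * R).det = (1 + t * ‖y‖ ^ 2) * R.det := by
    rw [← det_one_add_smul_rankOne_self]
    exact LinearMap.det_comp _ _
  have one_add_le : 1 + t * ‖y‖ ^ 2 ≤ b ^ (finrank ℝ E / p) := by
    have h := det_le_rpow_mul_det_of_isMaxOn hp0.ne' hmax hb functional_le
    rw [det_perturbed] at h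
    exact le_of_mul_le_mul_right h hdet
  calc Real.log (1 + t * ‖y‖ ^ 2) ≤ finrank ℝ E / p * Real.log b := by
        rw [← Real.log_rpow hb]
        exact Real.log_le_log ht one_add_le
    _ ≤ finrank ℝ E / p * (b - 1) := by
        gcongr
        exact Real.log_le_sub_one_of_pos hb
    _ = finrank ℝ E * B * (t + t ^ 2 * ‖y‖ ^ 2 / 2) := by
        rw [b_def]
        field_simp
        ring

lemma isLewisPosition_of_isMaxOn_det {p : ℝ} (hp0 : 0 < p) (hp2 : p ≤ 2) {a : ι → E}
    {R : E →L[ℝ] E} (hdet : 0 < R.det) (hR : lewisFunctional p a R ≤ 1)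
    (hmax : IsMaxOn ContinuousLinearMap.det {R | lewisFunctional p a R ≤ 1} R) :
    IsLewisPosition p fun j => R (a j) := by
  refine ⟨hR, fun y => eq_of_eventually_log_one_add_mul_le ?_⟩
  set B := lewisForm p (fun j => R (a j)) y
  have eventually_pos {f : ℝ → ℝ} (hf : Continuous f) (hf0 : 0 < f 0) : ∀ᶠ t in 𝓝 0, 0 < f t :=
    hf.continuousAt.eventually_const_lt hf0
  filter_upwards [
    eventually_pos (f := fun t => 1 + t * ‖y‖ ^ 2) (by fun_prop) (by simp),
    eventually_pos (f := fun t => 1 + B * (p * (t + t ^ 2 * ‖y‖ ^ 2 / 2))) (by fun_prop) (by simp)]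
    with t ht hb
  exact log_one_add_le_of_isMaxOn_det hp0 hp2 hdet hR hmax ht hb

lemma exists_weights_abs_inner_rpow_le_of_span_eq_top {p : ℝ} (hp0 : 0 < p) (hp2 : p ≤ 2)
    {a : ι → E} (ha : Submodule.span ℝ (Set.range a) = ⊤) :
    ∃ w : ι → ℝ, (∀ j, 0 ≤ w j) ∧ ∑ j, w j ≤ finrank ℝ E ∧
      ∀ v j, |⟪v, a j⟫| ^ p ≤ w j * ∑ l, |⟪v, a l⟫| ^ p := by
  obtain ⟨R, hdet, hR, hmax⟩ := exists_det_pos_isMaxOn_det hp0 ha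
  have hu := isLewisPosition_of_isMaxOn_det hp0 hp2 hdet hR hmax
  refine ⟨fun j => finrank ℝ E * ‖R (a j)‖ ^ p, fun j => by positivity, ?_, fun v j => ?_⟩
  · rw [← Finset.mul_sum]
    exact mul_le_of_le_one_right (Nat.cast_nonneg _) hu.sum_norm_rpow_le_one
  let e := R.toContinuousLinearEquivOfDetNeZero hdet.ne'
  let y := ContinuousLinearMap.adjoint (e.symm : E →L[ℝ] E) v
  have inner_eq (l : ι) : ⟪v, a l⟫ = ⟪y, R (a l)⟫ := by
    rw [ContinuousLinearMap.adjoint_inner_left]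
    exact congrArg _ (e.symm_apply_apply (a l)).symm
  simp only [inner_eq]
  calc |⟪y, R (a j)⟫| ^ p ≤ ‖y‖ ^ p * ‖R (a j)‖ ^ p := abs_inner_rpow_le hp0.le y _
    _ ≤ finrank ℝ E * (∑ l, |⟪y, R (a l)⟫| ^ p) * ‖R (a j)‖ ^ p := by
        gcongr
        exact hu.norm_rpow_le hp0.ne' hp2 y
    _ = finrank ℝ E * ‖R (a j)‖ ^ p * ∑ l, |⟪y, R (a l)⟫| ^ p := mul_right_comm _ _ _

end LewisPosition

lemma exists_weights_abs_inner_rpow_le {ι E : Type*} [Fintype ι] [NormedAddCommGroup E]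
    [InnerProductSpace ℝ E] {p : ℝ} (hp0 : 0 < p) (hp2 : p ≤ 2) (a : ι → E) :
    ∃ w : ι → ℝ, (∀ j, 0 ≤ w j) ∧ ∑ j, w j ≤ finrank ℝ (Submodule.span ℝ (Set.range a)) ∧
      ∀ v j, |⟪v, a j⟫| ^ p ≤ w j * ∑ l, |⟪v, a l⟫| ^ p := by
  let F := Submodule.span ℝ (Set.range a)
  have : FiniteDimensional ℝ F := FiniteDimensional.span_of_finite ℝ (Set.finite_range a)
  let a' : ι → F := fun j => ⟨a j, Submodule.subset_span (Set.mem_range_self j)⟩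
  obtain ⟨w, hw0, hw, hwa⟩ := exists_weights_abs_inner_rpow_le_of_span_eq_top hp0 hp2 (a := a')
    (Submodule.span_range_subtype_eq_top_iff F _ |>.2 rfl)
  refine ⟨w, hw0, hw, fun v j => ?_⟩
  simpa only [Submodule.inner_orthogonalProjectionOnto_eq_of_mem_right] using
    hwa (F.orthogonalProjectionOnto v) j

lemma lpSens_le_of_forall_abs_rpow_le {n d : ℕ} {p w : ℝ} {K : Matrix (Fin n) (Fin d) ℝ}
    {j : Fin n} (hw : 0 ≤ w)
    (h : ∀ v : Fin d → ℝ, |∑ i, K j i * v i| ^ p ≤ w * ∑ ℓ, |∑ i, K ℓ i * v i| ^ p) :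
    lpSens p K j ≤ w := by
  refine Real.sSup_le ?_ hw
  rintro _ ⟨v, -, rfl⟩
  exact div_le_of_le_mul₀ (by positivity) hw (h v)

theorem sum_lpSens_le_of_le_two_general {n d : ℕ} (p : ℝ) (hp0 : 0 < p) (hp2 : p ≤ 2)
    (K : Matrix (Fin n) (Fin d) ℝ) :
    ∑ j, lpSens p K j ≤ K.rank := by
  let row : Fin n → EuclideanSpace ℝ (Fin d) := fun j => WithLp.toLp 2 (K j)
  have inner_row (v : Fin d → ℝ) (j : Fin n) : ⟪WithLp.toLp 2 v, row j⟫ = ∑ i, K j i * v i := by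
    simp [row, EuclideanSpace.inner_eq_star_dotProduct, dotProduct]
  have finrank_span_row : finrank ℝ (Submodule.span ℝ (Set.range row)) = K.rank := by
    let e := (WithLp.linearEquiv 2 ℝ (Fin d → ℝ)).symm
    have range_row : Set.range row = e '' Set.range K.row := Set.range_comp e K.row
    rw [range_row, ← LinearEquiv.coe_coe, ← Submodule.map_span, LinearEquiv.finrank_map_eq,
      K.rank_eq_finrank_span_row]
  obtain ⟨w, hw0, hw, hrow⟩ := exists_weights_abs_inner_rpow_le hp0 hp2 row
  refine (Finset.sum_le_sum fun j _ => lpSens_le_of_forall_abs_rpow_le (hw0 j) fun v => ?_).trans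
    (hw.trans_eq (congrArg _ finrank_span_row))
  simpa only [inner_row] using hrow (WithLp.toLp 2 v) j

/-- For `1 ≤ p ≤ 2`, the `ℓ_p`-sensitivities of the rows of `K` sum to at most `d`. -/
theorem sum_lpSens_le_of_le_two {n d : ℕ} (p : ℝ) (hp1 : 1 ≤ p) (hp2 : p ≤ 2)
    (K : Matrix (Fin n) (Fin d) ℝ) :
    ∑ j, lpSens p K j ≤ (d : ℝ) :=
  (sum_lpSens_le_of_le_two_general p (zero_lt_one.trans_le hp1) hp2 K).trans
    (Nat.cast_le.2 K.rank_le_width)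
end

section
/- Let p > 2 and let K be an n×d real matrix with rows K_1,…,K_n. Then the sum over j = 1,…,n of the ℓ_p-sensitivities σ^{(p)}_j(K) is at most d^{p/2}. -/
/-!
Put `r = p / 2`, and let `s` maximize `det (Kᵀ diag(s) K)` over the nonnegative part of the unit
ball of the dual of `ℓ_r`. First-order optimality says that the scores `τ_j = K_j A⁻¹ K_jᵀ`, where
`A = Kᵀ diag(s) K`, pair to at most `d` with every weight of this ball; by duality
`∑ τ_j ^ r ≤ d ^ r`. On the other hand Cauchy–Schwarz for the form `A`, followed by Hölder, gives
`⟨K_j, v⟩² ≤ τ_j ∑ s_ℓ ⟨K_ℓ, v⟩² ≤ τ_j (∑ |⟨K_ℓ, v⟩| ^ p) ^ (1 / r)`, so that the sensitivity of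
row `j` is at most `τ_j ^ r`. Injectivity of `K` may be assumed, since sensitivities depend only on
the column space.
-/

open Filter Matrix Topology

section Trace

variable {m : Type*} [Fintype m] [DecidableEq m]

theorem hasDerivAt_det_one_add_smul (M : Matrix m m ℝ) :
    HasDerivAt (fun t : ℝ ↦ (1 + t • M).det) M.trace 0 := by
  have h := (1 + (Polynomial.X : Polynomial ℝ) • M.map Polynomial.C).det.hasDerivAt 0
  rw [derivative_det_one_add_X_smul] at h
  refine h.congr_of_eventuallyEq (.of_forall fun t ↦ ?_)
  simp [eval_det, ← smul_eq_mul_diagonal]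

theorem trace_nonpos_of_eventually_det_one_add_smul_le_one {M : Matrix m m ℝ}
    (h : ∀ᶠ t : ℝ in 𝓝[>] 0, (1 + t • M).det ≤ 1) : M.trace ≤ 0 := by
  refine le_of_tendsto (hasDerivAt_det_one_add_smul M).tendsto_slope_zero_right ?_
  filter_upwards [h, self_mem_nhdsWithin] with t hdet ht
  simpa using mul_nonpos_of_nonneg_of_nonpos (inv_nonneg.2 (le_of_lt ht)) (sub_nonpos.2 hdet)

theorem trace_inv_mul_le_card_of_isMaxOn_det {A B : Matrix m m ℝ} (hA : 0 < A.det)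
    (hmax : IsMaxOn det (segment ℝ A B) A) : (A⁻¹ * B).trace ≤ Fintype.card m := by
  suffices h : (A⁻¹ * B - 1).trace ≤ 0 by simpa [trace_sub, trace_one] using h
  refine trace_nonpos_of_eventually_det_one_add_smul_le_one ?_
  filter_upwards [Ioc_mem_nhdsGT zero_lt_one] with t ht
  have hfactor : A * (1 + t • (A⁻¹ * B - 1)) = (1 - t) • A + t • B := by
    rw [mul_add, Matrix.mul_smul, mul_sub, mul_nonsing_inv_cancel_left _ _ hA.ne'.isUnit]
    simp only [mul_one]
    module
  have hle : (A * (1 + t • (A⁻¹ * B - 1))).det ≤ A.det := by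
    rw [hfactor]
    exact hmax ⟨1 - t, t, sub_nonneg.2 ht.2, ht.1.le, sub_add_cancel 1 t, rfl⟩
  rw [det_mul] at hle
  exact (mul_le_iff_le_one_right hA).1 hle

end Trace

theorem sq_dotProduct_le_of_posDef {m : Type*} [Fintype m] [DecidableEq m] {A : Matrix m m ℝ}
    (hA : A.PosDef) (k v : m → ℝ) : (k ⬝ᵥ v) ^ 2 ≤ (k ⬝ᵥ A⁻¹ *ᵥ k) * (v ⬝ᵥ A *ᵥ v) := by
  have hsymm (x y : m → ℝ) : x ⬝ᵥ A *ᵥ y = y ⬝ᵥ A *ᵥ x := by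
    have hT : Aᵀ = A := hA.isHermitian.eq
    rw [dotProduct_mulVec, dotProduct_comm, ← mulVec_transpose, hT]
  have hk : A *ᵥ A⁻¹ *ᵥ k = k := by
    rw [mulVec_mulVec, mul_nonsing_inv _ hA.det_pos.ne'.isUnit, one_mulVec]
  have h := LinearMap.BilinForm.apply_sq_le_of_symm (toBilin' A)
    (fun x ↦ by simpa [toBilin'_apply'] using hA.posSemidef.dotProduct_mulVec_nonneg x)
    ⟨fun x y ↦ by simpa [toBilin'_apply'] using hsymm x y⟩ (A⁻¹ *ᵥ k) v
  simp only [toBilin'_apply', hk, hsymm _ v] at h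
  rwa [dotProduct_comm v k, dotProduct_comm (A⁻¹ *ᵥ k)] at h

section WeightedGram

variable {ι m : Type*} [Fintype ι] [DecidableEq ι]

/-- The Gram matrix `∑ j, s j • K_jᵀ K_j` of the columns of `K` in the inner product with weights
`s` on the rows. -/
def weightedGram (K : Matrix ι m ℝ) (s : ι → ℝ) : Matrix m m ℝ := Kᵀ * diagonal s * K

theorem weightedGram_smul_add_smul (K : Matrix ι m ℝ) (a b : ℝ) (s t : ι → ℝ) :
    weightedGram K (a • s + b • t) = a • weightedGram K s + b • weightedGram K t := by
  have hdiag : diagonal (a • s + b • t) = a • diagonal s + b • diagonal t := by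
    rw [← diagonal_smul, ← diagonal_smul, diagonal_add]
    rfl
  simp only [weightedGram, hdiag, Matrix.mul_add, Matrix.add_mul, Matrix.mul_smul, Matrix.smul_mul]

theorem posSemidef_weightedGram [Finite m] (K : Matrix ι m ℝ) {s : ι → ℝ} (hs : 0 ≤ s) :
    (weightedGram K s).PosSemidef :=
  (PosSemidef.diagonal hs).conjTranspose_mul_mul_same K

variable [Fintype m]

theorem posDef_weightedGram {K : Matrix ι m ℝ} (hK : Function.Injective K.mulVec) {s : ι → ℝ}
    (hs : ∀ j, 0 < s j) : (weightedGram K s).PosDef :=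
  (PosDef.diagonal hs).conjTranspose_mul_mul_same hK

theorem dotProduct_weightedGram_mulVec (K : Matrix ι m ℝ) (s : ι → ℝ) (v : m → ℝ) :
    v ⬝ᵥ weightedGram K s *ᵥ v = s ⬝ᵥ fun l ↦ (K *ᵥ v) l ^ 2 := by
  rw [weightedGram, ← mulVec_mulVec, ← mulVec_mulVec, dotProduct_mulVec, vecMul_transpose]
  refine Finset.sum_congr rfl fun l _ ↦ ?_
  rw [mulVec_diagonal]
  ring

variable [DecidableEq m]

/-- The leverage score of row `j` of `K` with respect to the weights `s`, without the usual
factor `s j`. It is meaningful only when `weightedGram K s` is invertible, the inverse being zero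
otherwise. -/
noncomputable def leverageScore (K : Matrix ι m ℝ) (s : ι → ℝ) (j : ι) : ℝ :=
  K j ⬝ᵥ (weightedGram K s)⁻¹ *ᵥ K j

theorem leverageScore_nonneg (K : Matrix ι m ℝ) {s : ι → ℝ} (hs : 0 ≤ s) :
    0 ≤ leverageScore K s :=
  fun j ↦ (posSemidef_weightedGram K hs).inv.dotProduct_mulVec_nonneg (K j)

theorem trace_inv_weightedGram_mul_weightedGram (K : Matrix ι m ℝ) (s t : ι → ℝ) :
    ((weightedGram K s)⁻¹ * weightedGram K t).trace = t ⬝ᵥ leverageScore K s := by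
  have hdiag (j : ι) : leverageScore K s j = (K * ((weightedGram K s)⁻¹ * Kᵀ)) j j := rfl
  rw [weightedGram.eq_def K t, ← Matrix.mul_assoc, trace_mul_comm, ← Matrix.mul_assoc,
    ← Matrix.mul_assoc, Matrix.mul_assoc K]
  simp only [trace, diag_apply, mul_diagonal, dotProduct, hdiag, mul_comm]

theorem sq_mulVec_le_leverageScore_mul {K : Matrix ι m ℝ} {s : ι → ℝ}
    (hs : (weightedGram K s).PosDef) (v : m → ℝ) (j : ι) :
    (K *ᵥ v) j ^ 2 ≤ leverageScore K s j * (s ⬝ᵥ fun l ↦ (K *ᵥ v) l ^ 2) := by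
  rw [← dotProduct_weightedGram_mulVec]
  exact sq_dotProduct_le_of_posDef hs (K j) v

theorem exists_posDef_weightedGram_forall_dotProduct_leverageScore_le {K : Matrix ι m ℝ}
    (hK : Function.Injective K.mulVec) {S : Set (ι → ℝ)} (hcompact : IsCompact S)
    (hconvex : Convex ℝ S) (hnonneg : ∀ s ∈ S, 0 ≤ s) (hpos : ∃ s ∈ S, ∀ j, 0 < s j) :
    ∃ s ∈ S, (weightedGram K s).PosDef ∧
      ∀ t ∈ S, t ⬝ᵥ leverageScore K s ≤ Fintype.card m := by
  obtain ⟨u, huS, hu⟩ := hpos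
  have hcont : Continuous fun s ↦ (weightedGram K s).det := by
    unfold weightedGram
    fun_prop
  obtain ⟨s, hsS, hmax⟩ := hcompact.exists_isMaxOn ⟨u, huS⟩ hcont.continuousOn
  have hdet : 0 < (weightedGram K s).det := (posDef_weightedGram hK hu).det_pos.trans_le (hmax huS)
  refine ⟨s, hsS, (posSemidef_weightedGram K (hnonneg s hsS)).posDef_iff_det_ne_zero.2 hdet.ne',
    fun t htS ↦ ?_⟩
  rw [← trace_inv_weightedGram_mul_weightedGram]
  refine trace_inv_mul_le_card_of_isMaxOn_det hdet ?_
  rintro _ ⟨a, b, ha, hb, hab, rfl⟩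
  rw [← weightedGram_smul_add_smul]
  exact hmax (hconvex hsS htS ha hb hab)

end WeightedGram

section DualWeights

variable {ι : Type*} [Fintype ι] {r : ℝ}

/-- The nonnegative part of the unit ball of the dual of `ℓ_r`. Describing it by the inequality
that Hölder would give, instead of by the conjugate exponent, includes `r = 1`. -/
def dualWeights (ι : Type*) [Fintype ι] (r : ℝ) : Set (ι → ℝ) :=
  {s | 0 ≤ s ∧ ∀ x, 0 ≤ x → s ⬝ᵥ x ≤ (∑ j, x j ^ r) ^ r⁻¹}

theorem convex_dualWeights : Convex ℝ (dualWeights ι r) := by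
  rintro s ⟨hs, hs'⟩ t ⟨ht, ht'⟩ a b ha hb hab
  refine ⟨add_nonneg (smul_nonneg ha hs) (smul_nonneg hb ht), fun x hx ↦ ?_⟩
  rw [add_dotProduct, smul_dotProduct, smul_dotProduct]
  exact convex_Iic _ (Set.mem_Iic.2 (hs' x hx)) (Set.mem_Iic.2 (ht' x hx)) ha hb hab

theorem isClosed_dualWeights : IsClosed (dualWeights ι r) := by
  simp only [dualWeights, Set.ofPred_and, Set.ofPred_forall]
  refine isClosed_Ici.inter (isClosed_iInter fun x ↦ isClosed_iInter fun _ ↦ ?_)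
  exact isClosed_le (continuous_id.dotProduct continuous_const) continuous_const

theorem le_one_of_mem_dualWeights (hr : r ≠ 0) {s : ι → ℝ} (hs : s ∈ dualWeights ι r) : s ≤ 1 := by
  classical
  intro j
  have h := hs.2 (Pi.single j 1) (Pi.single_nonneg.2 zero_le_one)
  simpa [Pi.single_apply, ite_pow, Real.zero_rpow hr, apply_ite (· ^ r)] using h

theorem isCompact_dualWeights (hr : r ≠ 0) : IsCompact (dualWeights ι r) :=
  isCompact_Icc.of_isClosed_subset isClosed_dualWeights
    fun _ hs ↦ ⟨hs.1, le_one_of_mem_dualWeights hr hs⟩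

theorem le_rpow_inv_sum_rpow (hr : 0 < r) {x : ι → ℝ} (hx : 0 ≤ x) (j : ι) :
    x j ≤ (∑ i, x i ^ r) ^ r⁻¹ := by
  have hpow (i : ι) : 0 ≤ x i ^ r := Real.rpow_nonneg (hx i) r
  rw [Real.le_rpow_inv_iff_of_pos (hx j) (Finset.sum_nonneg fun i _ ↦ hpow i) hr]
  exact Finset.single_le_sum (f := fun i ↦ x i ^ r) (fun i _ ↦ hpow i) (Finset.mem_univ j)

theorem const_inv_card_mem_dualWeights (hr : 0 < r) :
    (fun _ ↦ (Fintype.card ι : ℝ)⁻¹) ∈ dualWeights ι r := by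
  refine ⟨fun _ ↦ by positivity, fun x hx ↦ ?_⟩
  have hnorm : 0 ≤ (∑ j, x j ^ r) ^ r⁻¹ :=
    Real.rpow_nonneg (Finset.sum_nonneg fun j _ ↦ Real.rpow_nonneg (hx j) r) _
  calc (fun _ ↦ (Fintype.card ι : ℝ)⁻¹) ⬝ᵥ x
      ≤ ∑ _j : ι, (Fintype.card ι : ℝ)⁻¹ * (∑ i, x i ^ r) ^ r⁻¹ :=
        Finset.sum_le_sum fun j _ ↦
          mul_le_mul_of_nonneg_left (le_rpow_inv_sum_rpow hr hx j) (by positivity)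
    _ = (Fintype.card ι / Fintype.card ι : ℝ) * (∑ j, x j ^ r) ^ r⁻¹ := by
        rw [Finset.sum_const, Finset.card_univ, nsmul_eq_mul]
        ring
    _ ≤ (∑ j, x j ^ r) ^ r⁻¹ := mul_le_of_le_one_left hnorm (div_self_le_one _)

theorem exists_mem_dualWeights_dotProduct_eq (hr : 1 ≤ r) {x : ι → ℝ} (hx : 0 ≤ x) :
    ∃ s ∈ dualWeights ι r, s ⬝ᵥ x = (∑ j, x j ^ r) ^ r⁻¹ := by
  obtain rfl | hlt := hr.eq_or_lt
  · exact ⟨1, ⟨zero_le_one, fun y _ ↦ by simp [dotProduct]⟩, by simp [dotProduct]⟩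
  have hrq := Real.HolderConjugate.conjExponent hlt
  lift x to ι → NNReal using hx
  obtain ⟨g, hg, hgx : ∑ j, x j * g j = (∑ j, x j ^ r) ^ (1 / r)⟩ :=
    (NNReal.isGreatest_Lp Finset.univ x hrq).1
  refine ⟨fun j ↦ g j, ⟨fun j ↦ (g j).2, fun y hy ↦ ?_⟩, ?_⟩
  · lift y to ι → NNReal using hy
    have hgy : ∑ j, y j * g j ≤ (∑ j, y j ^ r) ^ (1 / r) :=
      (NNReal.isGreatest_Lp Finset.univ y hrq).2 ⟨g, hg, rfl⟩
    rw [dotProduct_comm, dotProduct, ← one_div]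
    beta_reduce
    exact_mod_cast hgy
  · rw [dotProduct_comm, dotProduct, ← one_div]
    beta_reduce
    exact_mod_cast hgx

theorem exists_mem_dualWeights_sum_leverageScore_rpow_le [DecidableEq ι] {m : Type*} [Fintype m]
    [DecidableEq m] (hr : 1 ≤ r) {K : Matrix ι m ℝ} (hK : Function.Injective K.mulVec) :
    ∃ s ∈ dualWeights ι r, (weightedGram K s).PosDef ∧
      ∑ j, leverageScore K s j ^ r ≤ (Fintype.card m : ℝ) ^ r := by
  have hr0 : 0 < r := zero_lt_one.trans_le hr
  obtain ⟨s, hs, hposDef, hle⟩ := exists_posDef_weightedGram_forall_dotProduct_leverageScore_le hK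
    (isCompact_dualWeights hr0.ne') convex_dualWeights (fun _ h ↦ h.1)
    ⟨_, const_inv_card_mem_dualWeights hr0, fun j ↦ by
      have : Nonempty ι := ⟨j⟩
      positivity⟩
  refine ⟨s, hs, hposDef, ?_⟩
  have hτ := leverageScore_nonneg K hs.1
  obtain ⟨t, ht, htτ⟩ := exists_mem_dualWeights_dotProduct_eq hr hτ
  rw [← Real.rpow_inv_le_iff_of_pos (Finset.sum_nonneg fun j _ ↦ Real.rpow_nonneg (hτ j) r)
    (Nat.cast_nonneg _) hr0, ← htτ]
  exact hle t ht

end DualWeights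

theorem exists_injective_mulVec_range_eq {R ι m : Type*} [Field R] [Finite ι] [Fintype m]
    (K : Matrix ι m R) :
    ∃ L : Matrix ι (Fin K.rank) R, Function.Injective L.mulVec ∧
      Set.range L.mulVec = Set.range K.mulVec := by
  let b : Module.Basis (Fin K.rank) R (LinearMap.range K.mulVecLin) := Module.finBasis R _
  let f := (LinearMap.range K.mulVecLin).subtype ∘ₗ b.equivFun.symm.toLinearMap
  have hf : (LinearMap.toMatrix' f).mulVec = f := funext f.toMatrix'_mulVec
  refine ⟨LinearMap.toMatrix' f, ?_, ?_⟩ <;> rw [hf]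
  · exact Subtype.val_injective.comp b.equivFun.symm.injective
  · rw [LinearMap.coe_comp, LinearEquiv.coe_coe, b.equivFun.symm.surjective.range_comp,
      Submodule.coe_subtype, Subtype.range_coe]
    rfl

section Sensitivity

variable {n d : ℕ} {p : ℝ} {K : Matrix (Fin n) (Fin d) ℝ} {j : Fin n}

theorem lpSens_le {c : ℝ} (hc : 0 ≤ c)
    (h : ∀ v, |(K *ᵥ v) j| ^ p ≤ c * ∑ l, |(K *ᵥ v) l| ^ p) : lpSens p K j ≤ c := by
  refine Real.sSup_le ?_ hc
  rintro _ ⟨v, -, rfl⟩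
  exact div_le_of_le_mul₀ (Finset.sum_nonneg fun l _ ↦ by positivity) hc (h v)

theorem lpSens_congr {e : ℕ} {L : Matrix (Fin n) (Fin e) ℝ}
    (h : Set.range L.mulVec = Set.range K.mulVec) : lpSens p L j = lpSens p K j := by
  have hset {k : ℕ} (M : Matrix (Fin n) (Fin k) ℝ) : lpSens p M j =
      sSup ((fun w ↦ |w j| ^ p / ∑ l, |w l| ^ p) '' (Set.range M.mulVec \ {0})) := by
    rw [lpSens]
    congr 1
    ext x
    constructor
    · rintro ⟨v, hv, rfl⟩
      exact ⟨M *ᵥ v, ⟨⟨v, rfl⟩, hv⟩, rfl⟩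
    · rintro ⟨_, ⟨⟨v, rfl⟩, hv⟩, rfl⟩
      exact ⟨v, hv, rfl⟩
  rw [hset, hset, h]

theorem lpSens_le_leverageScore_rpow (hp : 0 < p) {s : Fin n → ℝ}
    (hs : s ∈ dualWeights (Fin n) (p / 2)) (hposDef : (weightedGram K s).PosDef) :
    lpSens p K j ≤ leverageScore K s j ^ (p / 2) := by
  have hτ : 0 ≤ leverageScore K s j := leverageScore_nonneg K hs.1 j
  have hsq (x : ℝ) : (x ^ 2) ^ (p / 2) = |x| ^ p := by
    rw [← sq_abs, ← Real.rpow_natCast_mul (abs_nonneg x), Nat.cast_ofNat,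
      mul_div_cancel₀ p two_ne_zero]
  refine lpSens_le (by positivity) fun v ↦ ?_
  have hsum : 0 ≤ ∑ l, |(K *ᵥ v) l| ^ p := Finset.sum_nonneg fun l _ ↦ by positivity
  have hholder := hs.2 (fun l ↦ (K *ᵥ v) l ^ 2) fun l ↦ sq_nonneg _
  simp only [hsq] at hholder
  calc |(K *ᵥ v) j| ^ p
      = ((K *ᵥ v) j ^ 2) ^ (p / 2) := (hsq _).symm
    _ ≤ (leverageScore K s j * (∑ l, |(K *ᵥ v) l| ^ p) ^ (p / 2)⁻¹) ^ (p / 2) := by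
        gcongr
        exact (sq_mulVec_le_leverageScore_mul hposDef v j).trans
          (mul_le_mul_of_nonneg_left hholder hτ)
    _ = leverageScore K s j ^ (p / 2) * ∑ l, |(K *ᵥ v) l| ^ p := by
        rw [Real.mul_rpow hτ (by positivity), Real.rpow_inv_rpow hsum (by positivity)]

end Sensitivity

theorem sum_lpSens_le_of_gt_two_general {n d : ℕ} {p : ℝ} (hp : 2 ≤ p)
    (K : Matrix (Fin n) (Fin d) ℝ) : ∑ j, lpSens p K j ≤ (K.rank : ℝ) ^ (p / 2) := by
  obtain ⟨L, hL, hrange⟩ := exists_injective_mulVec_range_eq K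
  obtain ⟨s, hs, hposDef, hsum⟩ :=
    exists_mem_dualWeights_sum_leverageScore_rpow_le ((one_le_div₀ zero_lt_two).2 hp) hL
  calc ∑ j, lpSens p K j
      = ∑ j, lpSens p L j := Finset.sum_congr rfl fun _ _ ↦ (lpSens_congr hrange).symm
    _ ≤ ∑ j, leverageScore L s j ^ (p / 2) :=
        Finset.sum_le_sum fun _ _ ↦ lpSens_le_leverageScore_rpow (by positivity) hs hposDef
    _ ≤ (K.rank : ℝ) ^ (p / 2) := by simpa only [Fintype.card_fin] using hsum

/-- For `p > 2`, the `ℓ_p`-sensitivities of the rows of `K` sum to at most `d^{p/2}`. -/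
theorem sum_lpSens_le_of_gt_two {n d : ℕ} (p : ℝ) (hp : 2 < p)
    (K : Matrix (Fin n) (Fin d) ℝ) :
    ∑ j, lpSens p K j ≤ (d : ℝ) ^ (p / 2) := by
  refine (sum_lpSens_le_of_gt_two_general hp.le K).trans ?_
  gcongr
  exact K.rank_le_width
end
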